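/- Let A be a ring which is free of finite rank as a ℤ-module. Then there exists a finite set Π of prime numbers such that for any two algebraically closed fields k and k', each of whose characteristic is either zero or a prime not belonging to Π, there is a bijection φ from the set of isomorphism classes of simple A ⊗_ℤ k-modules to the set of isomorphism classes of simple A ⊗_ℤ k'-modules with the following property: for all simple A ⊗_ℤ k-modules S and T, the multiplicity of T as a composition factor of a projective cover of S equals the multiplicity of φ(T) as a composition factor of a projective cover of φ(S). In other words, the Cartan matrices of A ⊗_ℤ k and A ⊗_ℤ k' coincide up to a simultaneous relabelling of the simple modules. -/

import Mathlib

open TensorProduct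

universe u

/-- A bundled module over a ring `R`. -/
structure BundledModule (R : Type u) [Ring R] : Type (u + 1) where
  carrier : Type u
  [isAddCommGroup : AddCommGroup carrier]
  [isModule : Module R carrier]

attribute [instance] BundledModule.isAddCommGroup BundledModule.isModule

instance (R : Type u) [Ring R] : CoeSort (BundledModule R) (Type u) :=
  ⟨BundledModule.carrier⟩

/-- The family `V` is a complete, pairwise non-isomorphic list of representatives of the
isomorphism classes of simple `R`-modules. -/
def IsCompleteListOfSimples (R : Type u) [Ring R] {ι : Type u}
    (V : ι → BundledModule R) : Prop :=
  (∀ i, IsSimpleModule R (V i)) ∧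
  (∀ i j : ι, i ≠ j → IsEmpty ((V i) ≃ₗ[R] (V j))) ∧
  (∀ (N : Type u) [AddCommGroup N] [Module R N],
    IsSimpleModule R N → ∃ i, Nonempty (N ≃ₗ[R] (V i)))

/-- `π : M → N` is a projective cover: `π` is surjective, `M` is projective, and no proper
submodule of `M` is mapped onto `N` by `π`. -/
def IsProjectiveCover {R : Type u} [Ring R] {M N : Type u} [AddCommGroup M] [AddCommGroup N]
    [Module R M] [Module R N] (π : M →ₗ[R] N) : Prop :=
  Function.Surjective π ∧ Module.Projective R M ∧
    ∀ W : Submodule R M, W ≠ ⊤ → Submodule.map π W ≠ ⊤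

/-- `M` has a composition series in which exactly `n` of the (simple) subquotients are
isomorphic to `T`; by the Jordan–Hölder theorem this `n` is the multiplicity of `T` as a
composition factor of `M`. -/
def HasCompositionFactorMult (R : Type u) [Ring R] (M : Type u) [AddCommGroup M] [Module R M]
    (T : Type u) [AddCommGroup T] [Module R T] (n : ℕ) : Prop :=
  ∃ (m : ℕ) (c : Fin (m + 1) → Submodule R M),
    c 0 = ⊥ ∧ c (Fin.last m) = ⊤ ∧
    (∀ i : Fin m, c i.castSucc ⋖ c i.succ) ∧
    n = Nat.card { i : Fin m //
      Nonempty ((↥(c i.succ) ⧸ (Submodule.comap (c i.succ).subtype (c i.castSucc))) ≃ₗ[R] T) }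

/-!
Let `P i` be a projective cover of the simple module `S i` over a finite-dimensional algebra `B`
over an algebraically closed field `k`. If `e i` is an idempotent with `e i • S i` a line and
`e i • S j = 0` for `j ≠ i`, then `P i ≃ B e i`, and, as `e j • -` is exact, the multiplicity of
`S j` in `P i` is the dimension of `e j B e i`.

For `B = A ⊗ K`, with `K` an algebraic closure of `ℚ`, such idempotents and the quotient map from
`B` to a product of matrix algebras, whose kernel is nilpotent, involve only finitely many elements
of `K`. They are therefore defined over a finitely generated subring `R` of `K`. For some integer
`N ≠ 0`, `R[1/N]` is integral over `ℤ[1/N]`, so that `R` maps to every algebraically closed field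
`k` in which `N` does not vanish. Extension of scalars along `R → k` yields the simple modules and
the idempotents of `A ⊗ k`. Finally `x ↦ e j x e i` is an idempotent endomorphism of a finite flat
module over the domain `R`, and the rank of such an endomorphism is the same at all points of `R`.
-/

section Multiplicity

variable {k B M N Q : Type*} [Field k] [Ring B] [Algebra k B]
  [AddCommGroup M] [Module B M] [Module k M] [IsScalarTower k B M]
  [AddCommGroup N] [Module B N] [Module k N] [IsScalarTower k B N]
  [AddCommGroup Q] [Module B Q] [Module k Q] [IsScalarTower k B Q]

variable (k M) in
/-- The `k`-subspace `e • M` of a module `M` over a `k`-algebra. For an idempotent `e` dual to a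
simple module `S`, its dimension is the multiplicity of `S` in `M`. -/
noncomputable def smulRange (e : B) : Submodule k M :=
  LinearMap.range (Algebra.lsmul k k M e)

theorem smul_mem_smulRange (e : B) (x : M) : e • x ∈ smulRange k M e := ⟨x, rfl⟩

theorem mem_smulRange_iff {e : B} (he : IsIdempotentElem e) {x : M} :
    x ∈ smulRange k M e ↔ e • x = x := by
  refine ⟨?_, fun hx => ⟨x, hx⟩⟩
  rintro ⟨y, rfl⟩
  change e • e • y = e • y
  rw [smul_smul, he.eq]

theorem map_smulRange_of_surjective (e : B) {g : M →ₗ[B] Q} (hg : Function.Surjective g) :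
    (smulRange k M e).map (g.restrictScalars k) = smulRange k Q e := by
  have hcomm : g.restrictScalars k ∘ₗ Algebra.lsmul k k M e =
      Algebra.lsmul k k Q e ∘ₗ g.restrictScalars k :=
    LinearMap.ext fun x => map_smul g e x
  rw [smulRange, ← LinearMap.range_comp, hcomm]
  exact LinearMap.range_comp_of_range_eq_top _ (LinearMap.range_eq_top.2 hg)

theorem map_smulRange_of_exact {e : B} (he : IsIdempotentElem e) {f : N →ₗ[B] M} {g : M →ₗ[B] Q}
    (hf : Function.Injective f) (hfg : Function.Exact f g) :
    (smulRange k N e).map (f.restrictScalars k) =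
      smulRange k M e ⊓ LinearMap.ker (g.restrictScalars k) := by
  ext x
  simp only [Submodule.mem_map, Submodule.mem_inf, LinearMap.mem_ker, mem_smulRange_iff he,
    LinearMap.restrictScalars_apply]
  constructor
  · rintro ⟨y, hy, rfl⟩
    exact ⟨by rw [← map_smul, hy], hfg.apply_apply_eq_zero y⟩
  · rintro ⟨hx, hgx⟩
    obtain ⟨y, rfl⟩ := (hfg x).1 hgx
    exact ⟨y, hf (by rw [map_smul, hx]), rfl⟩

theorem finrank_smulRange_of_exact [FiniteDimensional k M] {e : B} (he : IsIdempotentElem e)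
    {f : N →ₗ[B] M} {g : M →ₗ[B] Q} (hf : Function.Injective f) (hfg : Function.Exact f g)
    (hg : Function.Surjective g) :
    Module.finrank k (smulRange k M e) =
      Module.finrank k (smulRange k N e) + Module.finrank k (smulRange k Q e) := by
  have hrange : LinearMap.range ((g.restrictScalars k).domRestrict (smulRange k M e)) =
      smulRange k Q e := by
    rw [LinearMap.range_domRestrict, map_smulRange_of_surjective e hg]
  have hker : Module.finrank k (LinearMap.ker ((g.restrictScalars k).domRestrict
      (smulRange k M e))) = Module.finrank k (smulRange k N e) := by
    rw [LinearMap.ker_domRestrict, ← Submodule.finrank_map_subtype_eq,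
      Submodule.map_comap_subtype, ← map_smulRange_of_exact he hf hfg]
    exact (Submodule.equivMapOfInjective (f.restrictScalars k) hf _).finrank_eq.symm
  rw [← LinearMap.finrank_range_add_finrank_ker ((g.restrictScalars k).domRestrict
    (smulRange k M e)), hrange, hker, add_comm]

theorem finrank_smulRange_congr (e : B) (f : M ≃ₗ[B] N) :
    Module.finrank k (smulRange k M e) = Module.finrank k (smulRange k N e) := by
  rw [← map_smulRange_of_surjective e f.surjective]
  exact ((f.restrictScalars k).finrank_map_eq _).symm

end Multiplicity

/-- The Peirce projection `x ↦ a * x * b`. -/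
def peirceMap (R : Type*) {B : Type*} [CommRing R] [Ring B] [Algebra R B] (a b : B) :
    B →ₗ[R] B :=
  LinearMap.mulLeftRight R (a, b)

@[simp]
theorem peirceMap_apply {R B : Type*} [CommRing R] [Ring B] [Algebra R B] (a b x : B) :
    peirceMap R a b x = a * x * b := rfl

/-- `C` is the Cartan matrix of `B` for some indexing of the simple `B`-modules: `C i j` is the
multiplicity of the `j`-th simple module in every projective cover of the `i`-th one. -/
def HasCartanMatrix (B : Type u) [Ring B] {ι : Type u} (C : ι → ι → ℕ) : Prop :=
  ∃ V : ι → BundledModule B, IsCompleteListOfSimples B V ∧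
    ∀ (i j : ι) (P : Type u) [AddCommGroup P] [Module B P] (π : P →ₗ[B] V i),
      IsProjectiveCover π → ∀ n : ℕ, HasCompositionFactorMult B P (V j) n ↔ n = C i j

theorem HasCartanMatrix.exists_forall_mult_iff {B B' : Type u} [Ring B] [Ring B'] {ι : Type u}
    {C : ι → ι → ℕ} (h : HasCartanMatrix B C) (h' : HasCartanMatrix B' C) :
    ∃ (ι : Type u) (V : ι → BundledModule B) (V' : ι → BundledModule B'),
      IsCompleteListOfSimples B V ∧ IsCompleteListOfSimples B' V' ∧
      ∀ i j : ι,
        ∀ (P : Type u) [AddCommGroup P] [Module B P] (π : P →ₗ[B] V i), IsProjectiveCover π →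
        ∀ (P' : Type u) [AddCommGroup P'] [Module B' P'] (π' : P' →ₗ[B'] V' i),
          IsProjectiveCover π' →
        ∀ n : ℕ, HasCompositionFactorMult B P (V j) n ↔
          HasCompositionFactorMult B' P' (V' j) n := by
  obtain ⟨V, hV, hC⟩ := h
  obtain ⟨V', hV', hC'⟩ := h'
  exact ⟨ι, V, V', hV, hV', fun i j P _ _ π hπ P' _ _ π' hπ' n =>
    (hC i j P π hπ n).trans (hC' i j P' π' hπ' n).symm⟩

theorem apply_last_eq_add_sum {α : Type*} [AddCommMonoid α] {m : ℕ} (f : Fin (m + 1) → α)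
    (δ : Fin m → α) (h : ∀ i : Fin m, f i.succ = f i.castSucc + δ i) :
    f (Fin.last m) = f 0 + ∑ i, δ i := by
  induction m with
  | zero => simp
  | succ m ih =>
    rw [Fin.sum_univ_castSucc, ← add_assoc, ← Fin.succ_last, h]
    congr 1
    exact ih (fun i => f i.castSucc) (fun i => δ i.castSucc) fun i => h i.castSucc

theorem eq_zero_of_isIdempotentElem_of_forall_isSimpleModule {B : Type u} [Ring B] {f : B}
    (hf : IsIdempotentElem f)
    (h : ∀ (S : Type u) [AddCommGroup S] [Module B S] [IsSimpleModule B S] (s : S), f • s = 0) :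
    f = 0 := by
  have htop : Ideal.span {1 - f} = ⊤ := by
    by_contra hne
    obtain ⟨m, hm, hle⟩ := Ideal.exists_le_maximal _ hne
    have : IsSimpleModule B (B ⧸ m) := isSimpleModule_iff_isCoatom.2 hm.out
    have hfm : f ∈ m := by
      rw [← Submodule.Quotient.mk_eq_zero, ← mul_one f]
      exact h (B ⧸ m) (Submodule.Quotient.mk 1)
    refine hm.ne_top ((Ideal.eq_top_iff_one m).2 ?_)
    rw [← sub_add_cancel 1 f]
    exact m.add_mem (hle (Ideal.mem_span_singleton_self _)) hfm
  obtain ⟨b, hb⟩ := Ideal.mem_span_singleton'.1 ((Ideal.eq_top_iff_one _).1 htop)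
  rw [← one_mul f, ← hb, mul_assoc, sub_mul, one_mul, hf.eq, sub_self, mul_zero]

theorem IsProjectiveCover.toSpanSingleton_surjective {B P S : Type u} [Ring B] [AddCommGroup P]
    [Module B P] [AddCommGroup S] [Module B S] [IsSimpleModule B S] {π : P →ₗ[B] S}
    (hπ : IsProjectiveCover π) {p : P} (hp : π p ≠ 0) :
    Function.Surjective (LinearMap.toSpanSingleton B P p) := by
  rw [← LinearMap.range_eq_top]
  by_contra hne
  refine hπ.2.2 _ hne ?_
  rw [← LinearMap.range_comp, LinearMap.comp_toSpanSingleton, LinearMap.range_eq_top]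
  exact IsSimpleModule.toSpanSingleton_surjective B hp

section DualFamily

/-- The idempotents `e j` of the `k`-algebra `B` are dual to a complete list `V` of simple
`B`-modules: `e j • V i` is a line for `i = j` and zero otherwise. -/
structure IsDualFamily (k : Type*) {B : Type u} [Field k] [Ring B] [Algebra k B] {ι : Type u}
    (V : ι → BundledModule B) [∀ i, Module k (V i)]
    [∀ i, IsScalarTower k B (V i)] (e : ι → B) : Prop where
  isCompleteListOfSimples : IsCompleteListOfSimples B V
  isIdempotentElem : ∀ i, IsIdempotentElem (e i)
  finrank_smulRange_self : ∀ i, Module.finrank k (smulRange k (V i) (e i)) = 1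
  smul_eq_zero_of_ne : ∀ {i j}, i ≠ j → ∀ v : V i, e j • v = 0

variable {k : Type*} {B ι : Type u} [Field k] [Ring B] [Algebra k B]
  {V : ι → BundledModule B} [∀ i, Module k (V i)] [∀ i, IsScalarTower k B (V i)] {e : ι → B}

namespace IsDualFamily

theorem finrank_smulRange_of_isSimpleModule (h : IsDualFamily k V e) (S : Type u) [AddCommGroup S]
    [Module B S] [Module k S] [IsScalarTower k B S] [IsSimpleModule B S] (j : ι)
    [Decidable (Nonempty (S ≃ₗ[B] V j))] :
    Module.finrank k (smulRange k S (e j)) = if Nonempty (S ≃ₗ[B] V j) then 1 else 0 := by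
  split_ifs with hj
  · obtain ⟨f⟩ := hj
    rw [finrank_smulRange_congr (e j) f, h.finrank_smulRange_self]
  · obtain ⟨l, ⟨f⟩⟩ := h.isCompleteListOfSimples.2.2 S inferInstance
    have hlj : l ≠ j := fun hlj => hj (hlj ▸ ⟨f⟩)
    have hbot : smulRange k (V l) (e j) = ⊥ :=
      LinearMap.range_eq_bot.2 (LinearMap.ext (h.smul_eq_zero_of_ne hlj))
    rw [finrank_smulRange_congr (e j) f, hbot, finrank_bot]

theorem finrank_smulRange_of_covBy (h : IsDualFamily k V e) {M : Type u} [AddCommGroup M]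
    [Module B M] [Module k M] [IsScalarTower k B M] [FiniteDimensional k M] (j : ι)
    {W₁ W₂ : Submodule B M} (hW : W₁ ⋖ W₂)
    [Decidable (Nonempty ((W₂ ⧸ W₁.comap W₂.subtype) ≃ₗ[B] V j))] :
    Module.finrank k (smulRange k W₂ (e j)) = Module.finrank k (smulRange k W₁ (e j)) +
      if Nonempty ((W₂ ⧸ W₁.comap W₂.subtype) ≃ₗ[B] V j) then 1 else 0 := by
  have : IsSimpleModule B (W₂ ⧸ W₁.comap W₂.subtype) := (covBy_iff_quot_is_simple hW.le).1 hW
  have : FiniteDimensional k W₂ := inferInstanceAs (FiniteDimensional k (W₂.restrictScalars k))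
  rw [← h.finrank_smulRange_of_isSimpleModule]
  refine finrank_smulRange_of_exact (h.isIdempotentElem j) (f := Submodule.inclusion hW.le)
    (g := (W₁.comap W₂.subtype).mkQ) (Submodule.inclusion_injective hW.le) ?_
    (Submodule.mkQ_surjective _)
  rw [LinearMap.exact_iff, Submodule.ker_mkQ, Submodule.range_inclusion]

theorem card_factors_eq_finrank_smulRange (h : IsDualFamily k V e) {M : Type u} [AddCommGroup M]
    [Module B M] [Module k M] [IsScalarTower k B M] [FiniteDimensional k M] (j : ι) {m : ℕ}
    {c : Fin (m + 1) → Submodule B M} (hbot : c 0 = ⊥) (htop : c (Fin.last m) = ⊤)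
    (hc : ∀ i : Fin m, c i.castSucc ⋖ c i.succ) :
    Nat.card { i : Fin m // Nonempty ((↥(c i.succ) ⧸
        (Submodule.comap (c i.succ).subtype (c i.castSucc))) ≃ₗ[B] V j) } =
      Module.finrank k (smulRange k M (e j)) := by
  classical
  have hsum := apply_last_eq_add_sum (fun i => Module.finrank k (smulRange k (c i) (e j))) _
    fun i => h.finrank_smulRange_of_covBy j (hc i)
  have hzero : Module.finrank k (smulRange k (⊥ : Submodule B M) (e j)) = 0 :=
    Module.finrank_zero_of_subsingleton
  rw [htop, hbot, hzero, zero_add, finrank_smulRange_congr (e j) Submodule.topEquiv] at hsum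
  rw [hsum, Nat.card_eq_fintype_card, Fintype.card_subtype, Finset.card_filter]

theorem hasCompositionFactorMult_iff (h : IsDualFamily k V e) {M : Type u} [AddCommGroup M]
    [Module B M] [Module k M] [IsScalarTower k B M] [FiniteDimensional k M] (j : ι) (n : ℕ) :
    HasCompositionFactorMult B M (V j) n ↔ n = Module.finrank k (smulRange k M (e j)) := by
  constructor
  · rintro ⟨m, c, hbot, htop, hc, rfl⟩
    exact h.card_factors_eq_finrank_smulRange j hbot htop hc
  · rintro rfl
    have : IsNoetherian B M := isNoetherian_of_tower k inferInstance
    have : IsArtinian B M := isArtinian_of_tower k inferInstance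
    obtain ⟨s, hbot, htop⟩ := exists_compositionSeries_of_isNoetherian_isArtinian B M
    exact ⟨s.length, s.toFun, hbot, htop, s.step,
      (h.card_factors_eq_finrank_smulRange j hbot htop s.step).symm⟩

theorem exists_forall_smul_eq (h : IsDualFamily k V e) (i : ι) :
    ∃ v : V i, v ≠ 0 ∧ e i • v = v ∧ ∀ w : V i, ∃ c : k, c • v = e i • w := by
  obtain ⟨⟨v, hv⟩, hv0, hspan⟩ := finrank_eq_one_iff'.1 (h.finrank_smulRange_self i)
  refine ⟨v, fun hz => hv0 (Subtype.ext hz), (mem_smulRange_iff (h.isIdempotentElem i)).1 hv,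
    fun w => ?_⟩
  obtain ⟨c, hc⟩ := hspan ⟨e i • w, smul_mem_smulRange _ _⟩
  exact ⟨c, congrArg Subtype.val hc⟩

theorem smul_eq_zero_of_isSimpleModule (h : IsDualFamily k V e) {i : ι} {v : V i}
    (hv : ∀ w : V i, ∃ c : k, c • v = e i • w) {x : B} (hx : x * e i = x) (hxv : x • v = 0)
    (S : Type u) [AddCommGroup S] [Module B S] [IsSimpleModule B S] (s : S) : x • s = 0 := by
  obtain ⟨l, ⟨f⟩⟩ := h.isCompleteListOfSimples.2.2 S inferInstance
  rw [← f.map_eq_zero_iff, map_smul, ← hx, mul_smul]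
  by_cases hli : l = i
  · subst hli
    obtain ⟨c, hc⟩ := hv (f s)
    rw [← hc, smul_comm, hxv, smul_zero]
  · rw [h.smul_eq_zero_of_ne hli, smul_zero]

theorem exists_generator_of_isProjectiveCover (h : IsDualFamily k V e) {i : ι} {P : Type u}
    [AddCommGroup P] [Module B P] {π : P →ₗ[B] V i} (hπ : IsProjectiveCover π) :
    ∃ p : P, e i • p = p ∧ Function.Surjective (LinearMap.toSpanSingleton B P p) ∧
      ∀ b : B, b * e i = b → b • p = 0 → b = 0 := by
  obtain ⟨v, hv0, hev, hline⟩ := h.exists_forall_smul_eq i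
  obtain ⟨p₀, hp₀⟩ := hπ.1 v
  obtain ⟨p, hep, hπp⟩ : ∃ p : P, e i • p = p ∧ π p = v :=
    ⟨e i • p₀, by rw [smul_smul, (h.isIdempotentElem i).eq], by rw [map_smul, hp₀, hev]⟩
  have hgen : Function.Surjective (LinearMap.toSpanSingleton B P p) :=
    have := h.isCompleteListOfSimples.1 i
    hπ.toSpanSingleton_surjective (hπp ▸ hv0)
  have := hπ.2.1
  obtain ⟨s, hs⟩ := Module.projective_lifting_property _ LinearMap.id hgen
  have hsp : s p • p = p := LinearMap.congr_fun hs p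
  have hes : e i * s p = s p := by rw [← smul_eq_mul, ← map_smul, hep]
  have hss : s p * s p = s p := by rw [← smul_eq_mul, ← map_smul, hsp]
  have hee := (h.isIdempotentElem i).eq
  have hue : s p * e i * s p = s p := by rw [mul_assoc, hes, hss]
  have hidem : IsIdempotentElem (e i - s p * e i) := by
    rw [IsIdempotentElem, mul_sub, sub_mul, sub_mul, hee, ← mul_assoc, hes, ← mul_assoc (s p * e i),
      hue, mul_assoc, hee, sub_self, sub_zero]
  have hzero : e i - s p * e i = 0 :=
    eq_zero_of_isIdempotentElem_of_forall_isSimpleModule hidem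
      (h.smul_eq_zero_of_isSimpleModule hline (by rw [sub_mul, mul_assoc, hee])
        (by rw [sub_smul, mul_smul, hev, ← hπp, ← map_smul, hsp, sub_self]))
  refine ⟨p, hep, hgen, fun b hb hbp => ?_⟩
  rw [← hb, sub_eq_zero.1 hzero, ← mul_assoc, ← smul_eq_mul b, ← map_smul, hbp, map_zero, zero_mul]

theorem finrank_smulRange_of_isProjectiveCover (h : IsDualFamily k V e) {i : ι} (j : ι)
    {P : Type u} [AddCommGroup P] [Module B P] [Module k P] [IsScalarTower k B P]
    {π : P →ₗ[B] V i} (hπ : IsProjectiveCover π) :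
    Module.finrank k (smulRange k P (e j)) =
      Module.finrank k (LinearMap.range (peirceMap k (e j) (e i))) := by
  obtain ⟨p, hep, hgen, hinj⟩ := h.exists_generator_of_isProjectiveCover hπ
  let eval : B →ₗ[k] P := (LinearMap.toSpanSingleton B P p).restrictScalars k
  have hrange : (LinearMap.range (peirceMap k (e j) (e i))).map eval = smulRange k P (e j) := by
    have hcomm : eval ∘ₗ peirceMap k (e j) (e i) = Algebra.lsmul k k P (e j) ∘ₗ eval := by
      ext b
      simp [eval, mul_smul, hep]
    rw [← LinearMap.range_comp, hcomm]
    exact LinearMap.range_comp_of_range_eq_top _ (LinearMap.range_eq_top.2 hgen)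
  have hker : LinearMap.ker (eval.domRestrict (LinearMap.range (peirceMap k (e j) (e i)))) = ⊥ := by
    refine LinearMap.ker_eq_bot'.2 ?_
    rintro ⟨_, b, rfl⟩ hb
    exact Subtype.ext
      (hinj _ (by simp only [peirceMap_apply, mul_assoc, (h.isIdempotentElem i).eq]) hb)
  rw [← hrange, ← LinearMap.range_domRestrict]
  exact LinearMap.finrank_range_of_inj (LinearMap.ker_eq_bot.1 hker)

theorem hasCartanMatrix [FiniteDimensional k B] (h : IsDualFamily k V e) :
    HasCartanMatrix B fun i j => Module.finrank k (LinearMap.range (peirceMap k (e j) (e i))) := by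
  refine ⟨V, h.isCompleteListOfSimples, fun i j P _ _ π hπ n => ?_⟩
  let _ : Module k P := Module.compHom P (algebraMap k B)
  have : IsScalarTower k B P := .of_algebraMap_smul fun _ _ => rfl
  obtain ⟨p, -, hgen, -⟩ := h.exists_generator_of_isProjectiveCover hπ
  have : FiniteDimensional k P :=
    Module.Finite.of_surjective ((LinearMap.toSpanSingleton B P p).restrictScalars k) hgen
  rw [h.hasCompositionFactorMult_iff, h.finrank_smulRange_of_isProjectiveCover j hπ]

end IsDualFamily

end DualFamily

section Splitting

/-- The product of the matrix algebras of size `κ i` over `R`. -/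
abbrev MatrixProd {ι : Type*} (κ : ι → Type*) (R : Type*) : Type _ :=
  ∀ i, Matrix (κ i) (κ i) R

/-- `G` presents `B` modulo a nilpotent ideal as a product of matrix algebras, and the idempotent
`e i` of `B` lifts the diagonal matrix unit of the `i`-th block at `o i`. -/
structure IsBasicSplitting {R B ι : Type*} [CommRing R] [Ring B] [Algebra R B] [DecidableEq ι]
    {κ : ι → Type*} [∀ i, Fintype (κ i)] [∀ i, DecidableEq (κ i)] (o : ∀ i, κ i)
    (G : B →ₐ[R] MatrixProd κ R) (e : ι → B) : Prop where
  surjective : Function.Surjective G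
  isNilpotent_ker : IsNilpotent (LinearMap.ker G.toLinearMap)
  isIdempotentElem : ∀ i, IsIdempotentElem (e i)
  map_idem : ∀ i, G (e i) = Pi.single i (Matrix.single (o i) (o i) 1)

variable {k B ι : Type*} [Field k] [Ring B] [Algebra k B]
  {κ : ι → Type*} [∀ i, Fintype (κ i)] [∀ i, DecidableEq (κ i)]

/-- The module of column vectors of the `i`-th block, with `B` acting through `G`. -/
def Column (_ : B →ₐ[k] MatrixProd κ k) (i : ι) : Type _ :=
  κ i → k

variable (G : B →ₐ[k] MatrixProd κ k) (i : ι)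

instance : AddCommGroup (Column G i) := inferInstanceAs (AddCommGroup (κ i → k))

instance : Module k (Column G i) := inferInstanceAs (Module k (κ i → k))

instance : Module B (Column G i) :=
  Module.compHom (κ i → k)
    ((Matrix.toLinAlgEquiv' (R := k) (n := κ i)).toAlgHom.comp
      ((Pi.evalAlgHom k (fun i => Matrix (κ i) (κ i) k) i).comp G)).toRingHom

theorem Column.smul_def (b : B) (v : Column G i) : b • v = Matrix.mulVec (G b i) v := rfl

instance : IsScalarTower k B (Column G i) := by
  refine ⟨fun c b v => ?_⟩
  rw [Column.smul_def, Column.smul_def, map_smul]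
  exact Matrix.smul_mulVec c (G b i) v

/-- The standard basis vector of the column module at the row `p`. -/
def Column.std (p : κ i) : Column G i := (Pi.single p 1 : κ i → k)

theorem Column.std_apply_same (p : κ i) : Column.std G i p p = (1 : k) :=
  Pi.single_eq_same (M := fun _ => k) p 1

theorem Column.std_ne_zero (p : κ i) : Column.std G i p ≠ 0 := fun h =>
  one_ne_zero ((Column.std_apply_same G i p).symm.trans (congrFun h p))

variable {G} [DecidableEq ι] {o : ∀ i, κ i} {e : ι → B}

theorem Column.matrixUnit_smul {b : B} {p q : κ i}
    (hb : G b = Pi.single i (Matrix.single p q 1)) (v : Column G i) :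
    b • v = (v q : k) • Column.std G i p := by
  rw [Column.smul_def, hb, Pi.single_eq_same]
  refine (Matrix.single_mulVec (x := (v : κ i → k)) p q 1).trans ?_
  ext x
  change _ = v q * (Pi.single p 1 : κ i → k) x
  simp [Pi.single_apply, Function.update_apply]

theorem MatrixProd.sum_matrixUnit_mul (R : Type*) [CommRing R] [Fintype ι] (o : ∀ i, κ i) :
    ∑ i : ι, ∑ p : κ i, (Pi.single i (Matrix.single p (o i) 1) *
      (Pi.single i (Matrix.single (o i) (o i) 1) * Pi.single i (Matrix.single (o i) p 1)) :
        MatrixProd κ R) = 1 := by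
  simp only [← Pi.single_mul, Matrix.single_mul_single_same, mul_one]
  ext j : 1
  simp only [Finset.sum_apply, Pi.one_apply]
  rw [Finset.sum_eq_single j (fun l _ hl => by simp [Pi.single_eq_of_ne hl.symm]) (by simp)]
  simp only [Pi.single_eq_same]
  exact Matrix.sum_single_one

namespace IsBasicSplitting

theorem smul_of_ne (h : IsBasicSplitting o G e) {i j : ι} (hij : i ≠ j) (v : Column G i) :
    e j • v = 0 := by
  rw [Column.smul_def, h.map_idem, Pi.single_eq_of_ne hij]
  exact Matrix.zero_mulVec (v : κ i → k)

theorem smul_std (h : IsBasicSplitting o G e) :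
    e i • Column.std G i (o i) = Column.std G i (o i) := by
  rw [Column.matrixUnit_smul i (h.map_idem i), Column.std_apply_same, one_smul]

theorem smul_eq_zero_of_map_eq_zero (h : IsBasicSplitting o G e) {x : B} (hx : G x = 0)
    {S : Type*} [AddCommGroup S] [Module B S] [IsSimpleModule B S] (s : S) : x • s = 0 := by
  by_contra hs
  obtain ⟨b, hb⟩ := IsSimpleModule.toSpanSingleton_surjective B hs s
  obtain ⟨n, hn⟩ := h.isNilpotent_ker
  have hbx : b * x ∈ LinearMap.ker G.toLinearMap := by simp [hx]
  have hnil : IsNilpotent (b * x) :=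
    ⟨n, by simpa only [hn, Submodule.zero_eq_bot, Submodule.mem_bot] using
      Submodule.pow_mem_pow _ hbx n⟩
  have hfix : (1 - b * x) • s = 0 := by
    rw [sub_smul, one_smul, mul_smul, sub_eq_zero]
    exact hb.symm
  rw [hnil.isUnit_one_sub.smul_eq_zero] at hfix
  exact hs (by rw [hfix, smul_zero])

theorem exists_smul_eq_of_std (h : IsBasicSplitting o G e) (v : Column G i) :
    ∃ b : B, b • Column.std G i (o i) = v := by
  choose b hb using fun p => h.surjective (Pi.single i (Matrix.single p (o i) 1))
  refine ⟨∑ p, (v p : k) • b p, ?_⟩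
  simp_rw [Finset.sum_smul, smul_assoc, Column.matrixUnit_smul i (hb _), Column.std_apply_same,
    one_smul]
  exact (pi_eq_sum_univ' (v : κ i → k)).symm

theorem isSimpleModule (h : IsBasicSplitting o G e) : IsSimpleModule B (Column G i) := by
  have : Nontrivial (Column G i) := ⟨_, 0, Column.std_ne_zero G i (o i)⟩
  refine isSimpleModule_iff_toSpanSingleton_surjective.2 ⟨this, fun v hv w => ?_⟩
  obtain ⟨q, hq⟩ : ∃ q, (v q : k) ≠ 0 := Function.ne_iff.1 hv
  obtain ⟨b, hb⟩ := h.surjective (Pi.single i (Matrix.single (o i) q 1))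
  obtain ⟨c, hc⟩ := h.exists_smul_eq_of_std i w
  refine ⟨c * ((v q : k)⁻¹ • b), ?_⟩
  rw [LinearMap.toSpanSingleton_apply, mul_smul, smul_assoc, Column.matrixUnit_smul i hb,
    smul_smul, inv_mul_cancel₀ hq, one_smul, hc]

theorem isEmpty_linearEquiv (h : IsBasicSplitting o G e) {i j : ι} (hij : i ≠ j) :
    IsEmpty (Column G i ≃ₗ[B] Column G j) := by
  refine ⟨fun f => Column.std_ne_zero G i (o i) (f.injective ?_)⟩
  rw [map_zero, ← h.smul_std i, map_smul, h.smul_of_ne hij.symm]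

theorem finrank_smulRange_column (h : IsBasicSplitting o G e) :
    Module.finrank k (smulRange k (Column G i) (e i)) = 1 := by
  refine finrank_eq_one_iff'.2 ⟨⟨Column.std G i (o i), _, h.smul_std i⟩,
    fun h0 => Column.std_ne_zero G i (o i) (congrArg Subtype.val h0), ?_⟩
  rintro ⟨_, v, rfl⟩
  exact ⟨(v (o i) : k), Subtype.ext (Column.matrixUnit_smul i (h.map_idem i) v).symm⟩

theorem exists_smul_ne_zero [Finite ι] (h : IsBasicSplitting o G e) (S : Type*) [AddCommGroup S]
    [Module B S] [IsSimpleModule B S] : ∃ i, ∃ s : S, e i • s ≠ 0 := by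
  have := Fintype.ofFinite ι
  by_contra! hzero
  choose b hb using fun x => h.surjective x
  have hone : G (∑ i, ∑ p, b (Pi.single i (Matrix.single p (o i) 1)) *
      (e i * b (Pi.single i (Matrix.single (o i) p 1))) - 1) = 0 := by
    simp only [map_sub, map_one, map_sum, map_mul, hb, h.map_idem, sub_eq_zero]
    exact MatrixProd.sum_matrixUnit_mul k o
  have := IsSimpleModule.nontrivial B S
  obtain ⟨s, hs⟩ := exists_ne (0 : S)
  have hs' := h.smul_eq_zero_of_map_eq_zero hone s
  simp only [sub_smul, one_smul, Finset.sum_smul, mul_smul, hzero, smul_zero,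
    Finset.sum_const_zero, zero_sub, neg_eq_zero] at hs'
  exact hs hs'

theorem map_mul_eq_zero_of_smul_std_eq_zero (h : IsBasicSplitting o G e) {b : B}
    (hb : b • Column.std G i (o i) = 0) : G (b * e i) = 0 := by
  rw [map_mul, h.map_idem]
  ext j p q
  rw [Pi.mul_apply]
  by_cases hj : j = i
  · subst hj
    have hp : (G b j).mulVec (Pi.single (o j) 1) p = 0 := congrFun hb p
    by_cases hq : q = o j
    · subst hq
      simpa using hp
    · simp [hq]
  · simp [Pi.single_eq_of_ne hj]

theorem nonempty_linearEquiv_of_smul_ne_zero (h : IsBasicSplitting o G e) {S : Type*}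
    [AddCommGroup S] [Module B S] [IsSimpleModule B S] {s : S} (hs : e i • s ≠ 0) :
    Nonempty (S ≃ₗ[B] Column G i) := by
  let f : B →ₗ[B] Column G i := .toSpanSingleton B _ (Column.std G i (o i))
  let g : B →ₗ[B] S := .toSpanSingleton B _ (e i • s)
  have hf : Function.Surjective f := h.exists_smul_eq_of_std i
  have hg : Function.Surjective g := IsSimpleModule.toSpanSingleton_surjective B hs
  have hle : LinearMap.ker f ≤ LinearMap.ker g := fun b hb => by
    rw [LinearMap.mem_ker, LinearMap.toSpanSingleton_apply, smul_smul]
    exact h.smul_eq_zero_of_map_eq_zero (h.map_mul_eq_zero_of_smul_std_eq_zero i hb) s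
  have := h.isSimpleModule i
  have hmax := IsSimpleModule.ker_toSpanSingleton_isMaximal B (Column.std_ne_zero G i (o i))
  have hne : LinearMap.ker g ≠ ⊤ := fun htop =>
    hs ((LinearMap.toSpanSingleton_eq_zero_iff B S).1 (LinearMap.ker_eq_top.1 htop))
  exact ⟨(g.quotKerEquivOfSurjective hg).symm ≪≫ₗ
    Submodule.quotEquivOfEq _ _ (hmax.eq_of_le hne hle).symm ≪≫ₗ f.quotKerEquivOfSurjective hf⟩

end IsBasicSplitting

end Splitting

/-- `Column G i` as a bundled module. -/
abbrev columnModule {k B : Type u} [Field k] [Ring B] [Algebra k B] {ι : Type*} {κ : ι → Type}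
    [∀ i, Fintype (κ i)] [∀ i, DecidableEq (κ i)] (G : B →ₐ[k] MatrixProd κ k) (i : ι) :
    BundledModule B :=
  ⟨Column G i⟩

theorem IsBasicSplitting.isDualFamily {k B : Type u} [Field k] [Ring B] [Algebra k B] {ι : Type}
    [Finite ι] [DecidableEq ι] {κ : ι → Type} [∀ i, Fintype (κ i)] [∀ i, DecidableEq (κ i)]
    {o : ∀ i, κ i} {G : B →ₐ[k] MatrixProd κ k} {e : ι → B} (h : IsBasicSplitting o G e) :
    IsDualFamily k (fun i : ULift.{u} ι => columnModule G i.down) (e ∘ ULift.down) where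
  isCompleteListOfSimples := by
    refine ⟨fun i => h.isSimpleModule i.down, fun i j hij => ?_, fun S _ _ _ => ?_⟩
    · exact h.isEmpty_linearEquiv fun hd => hij (ULift.ext _ _ hd)
    · obtain ⟨i, s, hs⟩ := h.exists_smul_ne_zero S
      exact ⟨⟨i⟩, h.nonempty_linearEquiv_of_smul_ne_zero i hs⟩
  isIdempotentElem i := h.isIdempotentElem i.down
  finrank_smulRange_self i := h.finrank_smulRange_column i.down
  smul_eq_zero_of_ne hij v := h.smul_of_ne (fun hd => hij (ULift.ext _ _ hd)) v

theorem exists_isBasicSplitting (k : Type*) {B : Type*} [Field k] [IsAlgClosed k] [Ring B]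
    [Algebra k B] [FiniteDimensional k B] :
    ∃ (n : ℕ) (d : Fin n → ℕ) (o : ∀ i, Fin (d i)) (G : B →ₐ[k] MatrixProd (fun i => Fin (d i)) k)
      (e : Fin n → B), IsBasicSplitting o G e := by
  have : IsArtinianRing B := IsArtinianRing.of_finite k B
  have : FiniteDimensional k (B ⧸ Ring.jacobson B) :=
    Module.Finite.of_surjective (Ideal.Quotient.mkₐ k (Ring.jacobson B)).toLinearMap
      Ideal.Quotient.mk_surjective
  have : IsSemisimpleRing (B ⧸ Ring.jacobson B) := IsSemiprimaryRing.isSemisimpleRing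
  obtain ⟨n, d, hd, ⟨ψ⟩⟩ :=
    IsSemisimpleRing.exists_algEquiv_pi_matrix_of_isAlgClosed k (B ⧸ Ring.jacobson B)
  let G : B →ₐ[k] MatrixProd (fun i => Fin (d i)) k :=
    ψ.toAlgHom.comp (Ideal.Quotient.mkₐ k (Ring.jacobson B))
  have hG : Function.Surjective G := ψ.surjective.comp Ideal.Quotient.mk_surjective
  have hker : LinearMap.ker G.toLinearMap = (Ring.jacobson B).restrictScalars k := by
    ext b
    exact (map_eq_zero_iff ψ ψ.injective).trans Ideal.Quotient.eq_zero_iff_mem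
  obtain ⟨N, hN⟩ : IsNilpotent (Ring.jacobson B) := IsSemiprimaryRing.isNilpotent
  have hnil : IsNilpotent (LinearMap.ker G.toLinearMap) := by
    refine ⟨N + 1, ?_⟩
    rw [hker, ← Submodule.restrictScalars_pow N.succ_ne_zero, Submodule.pow_succ, hN, zero_mul]
    rfl
  have hidem (i : Fin n) : IsIdempotentElem
      (Pi.single i (Matrix.single 0 0 1) : MatrixProd (fun i => Fin (d i)) k) := by
    rw [IsIdempotentElem, ← Pi.single_mul, Matrix.single_mul_single_same, one_mul]
  choose e he hGe using fun i => exists_isIdempotentElem_eq_of_ker_isNilpotent (G : B →+* _)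
    (fun x hx => ⟨N, by
      simpa only [hN, Submodule.zero_eq_bot, Submodule.mem_bot] using
        Ideal.pow_mem_pow (hker.le hx) N⟩)
    _ (hG _) (hidem i)
  exact ⟨n, d, fun i => 0, G, e, hG, hnil, he, hGe⟩

section RankConstancy

theorem finrank_range_baseChange_of_isIdempotentElem {R M : Type*} [CommRing R] [IsDomain R]
    [AddCommGroup M] [Module R M] [Module.Finite R M] [Module.Flat R M] {θ : Module.End R M}
    (hθ : IsIdempotentElem θ) (k : Type*) [Field k] [Algebra R k] :
    Module.finrank k (LinearMap.range (θ.baseChange k)) =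
      Module.rankAtStalk (LinearMap.range θ) (⊥ : PrimeSpectrum R) := by
  have hretract : θ.rangeRestrict ∘ₗ (LinearMap.range θ).subtype = LinearMap.id := by
    ext ⟨_, x, rfl⟩
    exact LinearMap.congr_fun hθ.eq x
  have : Module.Flat R (LinearMap.range θ) := Module.Flat.of_retract _ _ hretract
  have hrange : LinearMap.range (θ.baseChange k) =
      LinearMap.range ((LinearMap.range θ).subtype.baseChange k) := by
    conv_lhs => rw [← θ.subtype_comp_codRestrict (LinearMap.range θ) θ.mem_range_self,
      LinearMap.baseChange_comp]
    exact LinearMap.range_comp_of_range_eq_top _ (LinearMap.range_eq_top.2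
      (LinearMap.lTensor_surjective k θ.surjective_rangeRestrict))
  have hinj : Function.Injective ((LinearMap.range θ).subtype.baseChange k) := by
    refine Function.LeftInverse.injective (g := θ.rangeRestrict.baseChange k) fun x => ?_
    rw [← LinearMap.comp_apply, ← LinearMap.baseChange_comp, hretract, LinearMap.baseChange_id,
      LinearMap.id_apply]
  have hfree : Module.rankAtStalk (k ⊗[R] LinearMap.range θ) (⊥ : PrimeSpectrum k) =
      Module.finrank k (k ⊗[R] LinearMap.range θ) := by
    rw [Module.rankAtStalk_eq_finrank_of_free, Pi.natCast_apply, Nat.cast_id]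
  rw [hrange, LinearMap.finrank_range_of_inj hinj, ← hfree, Module.rankAtStalk_baseChange]
  exact (Module.rankAtStalk_eq_of_le_of_finite_of_flat _ bot_le).symm

theorem peirceMap_one_tmul {R B : Type*} [CommRing R] [Ring B] [Algebra R B] (S : Type*)
    [CommRing S] [Algebra R S] (a b : B) :
    peirceMap S ((1 : S) ⊗ₜ[R] a) (1 ⊗ₜ b) = (peirceMap R a b).baseChange S := by
  ext x
  simp

theorem isIdempotentElem_peirceMap {R B : Type*} [CommRing R] [Ring B] [Algebra R B] {a b : B}
    (ha : IsIdempotentElem a) (hb : IsIdempotentElem b) :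
    IsIdempotentElem (peirceMap R a b : Module.End R B) := by
  ext x
  change a * (a * x * b) * b = a * x * b
  rw [mul_assoc a, mul_assoc _ b, hb.eq, mul_assoc a x b, ← mul_assoc, ha.eq]

/-- The rank over the fraction field of `R` of the Peirce component `aBb`. -/
noncomputable def peirceRank (R : Type*) {B : Type*} [CommRing R] [IsDomain R] [Ring B]
    [Algebra R B] (a b : B) : ℕ :=
  Module.rankAtStalk (LinearMap.range (peirceMap R a b)) (⊥ : PrimeSpectrum R)

theorem finrank_range_peirceMap_one_tmul {R B : Type*} [CommRing R] [IsDomain R] [Ring B]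
    [Algebra R B] [Module.Finite R B] [Module.Flat R B] {a b : B} (ha : IsIdempotentElem a)
    (hb : IsIdempotentElem b) (k : Type*) [Field k] [Algebra R k] :
    Module.finrank k (LinearMap.range (peirceMap k ((1 : k) ⊗ₜ[R] a) (1 ⊗ₜ b))) =
      peirceRank R a b := by
  rw [peirceMap_one_tmul,
    finrank_range_baseChange_of_isIdempotentElem (isIdempotentElem_peirceMap ha hb), peirceRank]

end RankConstancy

section BaseChange

theorem baseChange_pow {R B : Type*} [CommRing R] [Ring B] [Algebra R B] (S : Type*) [CommRing S]
    [Algebra R S] (I : Submodule R B) (n : ℕ) :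
    (I ^ n).baseChange S = I.baseChange S ^ n := by
  obtain ⟨s, rfl⟩ : ∃ s : Set B, Submodule.span R s = I := ⟨I, Submodule.span_eq I⟩
  rw [Submodule.span_pow, Submodule.baseChange_span, Submodule.baseChange_span,
    Submodule.span_pow]
  congr 1
  exact Set.image_pow (Algebra.TensorProduct.includeRight : B →ₐ[R] S ⊗[R] B) s n

variable (R S : Type*) [CommRing R] [CommRing S] [Algebra R S]

/-- The base change to `S` of a matrix algebra over `R` is the matrix algebra over `S`. -/
noncomputable def matrixBaseChange (n : Type*) [Fintype n] [DecidableEq n] :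
    S ⊗[R] Matrix n n R ≃ₐ[S] Matrix n n S :=
  AlgEquiv.ofRingEquiv (f := (matrixEquivTensor n R S).symm.toRingEquiv) fun s => by
    refine (matrixEquivTensor_apply_symm n R S s 1).trans ?_
    rw [Matrix.map_one _ (map_zero _) (map_one _), Algebra.algebraMap_eq_smul_one]

theorem matrixBaseChange_one_tmul {n : Type*} [Fintype n] [DecidableEq n] (M : Matrix n n R) :
    matrixBaseChange R S n (1 ⊗ₜ M) = M.map (algebraMap R S) := by
  ext p q
  change (matrixEquivTensor n R S).symm (1 ⊗ₜ M) p q = _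
  simp [matrixEquivTensor_apply_symm]

variable {B ι : Type*} [Ring B] [Algebra R B] [Fintype ι] [DecidableEq ι]
  {κ : ι → Type*} [∀ i, Fintype (κ i)] [∀ i, DecidableEq (κ i)]

variable (κ) in
/-- The base change to `S` of a product of matrix algebras over `R` is the product of matrix
algebras over `S`. -/
noncomputable def matrixProdBaseChange : S ⊗[R] MatrixProd κ R ≃ₐ[S] MatrixProd κ S :=
  (Algebra.TensorProduct.piRight R S S fun i => Matrix (κ i) (κ i) R).trans
    (AlgEquiv.piCongrRight fun i => matrixBaseChange R S (κ i))

variable {R}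

/-- The morphism from the base change of `B` to the product of matrix algebras over `S` induced
by a morphism from `B` to the product of matrix algebras over `R`. -/
noncomputable def splittingBaseChange (G : B →ₐ[R] MatrixProd κ R) :
    S ⊗[R] B →ₐ[S] MatrixProd κ S :=
  (matrixProdBaseChange R S κ).toAlgHom.comp (Algebra.TensorProduct.map (AlgHom.id S S) G)

theorem splittingBaseChange_one_tmul (G : B →ₐ[R] MatrixProd κ R) (b : B) (i : ι) :
    splittingBaseChange S G (1 ⊗ₜ b) i = (G b i).map (algebraMap R S) :=
  matrixBaseChange_one_tmul R S (G b i)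

theorem ker_splittingBaseChange {G : B →ₐ[R] MatrixProd κ R} (hG : Function.Surjective G) :
    LinearMap.ker (splittingBaseChange S G).toLinearMap =
      (LinearMap.ker G.toLinearMap).baseChange S := by
  have hexact : Function.Exact (LinearMap.ker G.toLinearMap).subtype G.toLinearMap :=
    LinearMap.exact_subtype_ker_map _
  ext x
  refine Iff.trans ?_ (lTensor_exact S hexact hG x)
  exact map_eq_zero_iff _ (matrixProdBaseChange R S κ).injective

theorem IsBasicSplitting.baseChange {o : ∀ i, κ i} {G : B →ₐ[R] MatrixProd κ R} {e : ι → B}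
    (h : IsBasicSplitting o G e) :
    IsBasicSplitting o (splittingBaseChange S G) (fun i => (1 : S) ⊗ₜ[R] e i) where
  surjective := (matrixProdBaseChange R S κ).surjective.comp
    (LinearMap.lTensor_surjective (g := G.toLinearMap) S h.surjective)
  isNilpotent_ker := by
    obtain ⟨n, hn⟩ := h.isNilpotent_ker
    refine ⟨n, ?_⟩
    rw [ker_splittingBaseChange S h.surjective, ← baseChange_pow, hn, Submodule.zero_eq_bot,
      Submodule.baseChange_bot, Submodule.zero_eq_bot]
  isIdempotentElem i := by
    rw [IsIdempotentElem, Algebra.TensorProduct.tmul_mul_tmul, one_mul, (h.isIdempotentElem i).eq]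
  map_idem i := by
    ext j : 1
    rw [splittingBaseChange_one_tmul, h.map_idem]
    by_cases hij : j = i
    · subst hij
      simp
    · simp [Pi.single_eq_of_ne hij]

end BaseChange

section Descent

variable {ι : Type*} {κ : ι → Type*} [∀ i, Fintype (κ i)] [∀ i, DecidableEq (κ i)]

variable (κ) in
/-- Entrywise extension of scalars from `R` to `S` on a product of matrix algebras. -/
def MatrixProd.map (R S : Type*) [CommRing R] [CommRing S] [Algebra R S] :
    MatrixProd κ R →ₐ[R] MatrixProd κ S :=
  AlgHom.pi fun i => (Algebra.ofId R S).mapMatrix.comp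
    (Pi.evalAlgHom R (fun i => Matrix (κ i) (κ i) R) i)

theorem MatrixProd.map_apply {R S : Type*} [CommRing R] [CommRing S] [Algebra R S]
    (M : MatrixProd κ R) (i : ι) : MatrixProd.map κ R S M i = (M i).map (algebraMap R S) := rfl

theorem MatrixProd.map_injective {R S : Type*} [CommRing R] [CommRing S] [Algebra R S]
    (h : Function.Injective (algebraMap R S)) : Function.Injective (MatrixProd.map κ R S) :=
  fun _ _ hMN => funext fun i => Matrix.map_injective h (congrFun hMN i)

theorem MatrixProd.map_single [DecidableEq ι] {R S : Type*} [CommRing R] [CommRing S]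
    [Algebra R S] (i : ι) (p q : κ i) :
    MatrixProd.map κ R S (Pi.single i (Matrix.single p q 1)) =
      Pi.single i (Matrix.single p q 1) := by
  ext j : 1
  rw [MatrixProd.map_apply]
  by_cases hij : j = i
  · subst hij
    simp
  · simp [Pi.single_eq_of_ne hij]

theorem MatrixProd.mem_range_map {R S : Type*} [CommRing R] [CommRing S] [Algebra R S]
    {M : MatrixProd κ S} (h : ∀ i p q, M i p q ∈ Set.range (algebraMap R S)) :
    M ∈ (MatrixProd.map κ R S).range := by
  choose m hm using h
  exact ⟨fun i => Matrix.of (m i), funext fun i => Matrix.ext fun p q => hm i p q⟩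

theorem MatrixProd.sum_smul_single [Fintype ι] [DecidableEq ι] {R : Type*} [CommRing R]
    (M : MatrixProd κ R) :
    (∑ i, ∑ p, ∑ q, M i p q • (Pi.single i (Matrix.single p q 1) : MatrixProd κ R)) = M := by
  calc _ = ∑ i, (Pi.single i (M i) : MatrixProd κ R) := by
        refine Finset.sum_congr rfl fun i _ => ?_
        conv_rhs => rw [Matrix.matrix_eq_sum_single (M i)]
        simp only [← Pi.single_smul, Matrix.smul_single, smul_eq_mul, mul_one]
        change _ = AddMonoidHom.single (fun i => Matrix (κ i) (κ i) R) i _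
        simp only [map_sum, AddMonoidHom.single_apply]
    _ = M := Finset.univ_sum_single M

theorem exists_algHom_comp_eq {R A B C : Type*} [CommSemiring R] [Semiring A] [Semiring B]
    [Semiring C] [Algebra R A] [Algebra R B] [Algebra R C] {f : B →ₐ[R] C}
    (hf : Function.Injective f) (g : A →ₐ[R] C) (hg : ∀ a, g a ∈ f.range) :
    ∃ g' : A →ₐ[R] B, f.comp g' = g := by
  refine ⟨(AlgEquiv.ofInjective f hf).symm.toAlgHom.comp (g.codRestrict f.range hg), ?_⟩
  ext a
  exact congrArg Subtype.val ((AlgEquiv.ofInjective f hf).apply_symm_apply ⟨g a, hg a⟩)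

theorem isNilpotent_of_map {R S B B' : Type*} [CommRing R] [CommRing S] [Algebra R S] [Ring B]
    [Ring B'] [Algebra R B'] [Algebra R B] [Algebra S B] [IsScalarTower R S B] {f : B' →ₐ[R] B}
    (hf : Function.Injective f) {I : Submodule R B'} {J : Submodule S B} (hJ : IsNilpotent J)
    (hIJ : ∀ x ∈ I, f x ∈ J) : IsNilpotent I := by
  obtain ⟨n, hn⟩ := hJ
  refine ⟨n + 1, (Submodule.eq_bot_iff _).2 fun x hx => ?_⟩
  have hle : (I ^ (n + 1)).map f.toLinearMap ≤ (J ^ (n + 1)).restrictScalars R := by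
    rw [Submodule.map_pow, Submodule.restrictScalars_pow (Nat.succ_ne_zero n)]
    exact pow_le_pow_left' (Submodule.map_le_iff_le_comap.2 hIJ) _
  rw [pow_succ J, hn, zero_mul] at hle
  exact hf ((hle (Submodule.mem_map_of_mem hx)).trans (map_zero f).symm)

theorem IsBasicSplitting.of_injective [Finite ι] [DecidableEq ι] {R S B B' : Type*}
    [CommRing R] [CommRing S] [Algebra R S] [Ring B] [Ring B'] [Algebra R B'] [Algebra R B]
    [Algebra S B] [IsScalarTower R S B] (hRS : Function.Injective (algebraMap R S)) {f : B' →ₐ[R] B}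
    (hf : Function.Injective f) {o : ∀ i, κ i} {G : B →ₐ[S] MatrixProd κ S}
    {G' : B' →ₐ[R] MatrixProd κ R}
    (hG : (MatrixProd.map κ R S).comp G' = (G.restrictScalars R).comp f)
    {e' : ι → B'} (h : IsBasicSplitting o G fun i => f (e' i))
    (hunit : ∀ i p q, ∃ b, G (f b) = (Pi.single i (Matrix.single p q 1) : MatrixProd κ S)) :
    IsBasicSplitting o G' e' := by
  have hcomm (b : B') : MatrixProd.map κ R S (G' b) = G (f b) := DFunLike.congr_fun hG b
  have hlift {b : B'} {i : ι} {p q : κ i}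
      (hb : G (f b) = Pi.single i (Matrix.single p q 1)) :
      G' b = Pi.single i (Matrix.single p q 1) :=
    MatrixProd.map_injective hRS (by rw [hcomm, hb, MatrixProd.map_single])
  refine ⟨fun M => ?_, ?_, fun i => ?_, fun i => hlift (h.map_idem i)⟩
  · have := Fintype.ofFinite ι
    choose b hb using hunit
    refine ⟨∑ i, ∑ p, ∑ q, M i p q • b i p q, ?_⟩
    simp only [map_sum, map_smul, hlift (hb _ _ _)]
    exact MatrixProd.sum_smul_single M
  · refine isNilpotent_of_map hf h.isNilpotent_ker fun x hx => ?_
    have hx' : G' x = 0 := hx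
    change G (f x) = 0
    rw [← hcomm, hx', map_zero]
  · exact hf (by rw [map_mul]; exact h.isIdempotentElem i)

end Descent

section Tower

variable {Z R K A : Type*} [CommRing Z] [CommRing R] [CommRing K] [Algebra Z R] [Algebra Z K]
  [Algebra R K] [IsScalarTower Z R K] [Ring A] [Algebra Z A]

variable (Z R K A) in
/-- The morphism from `R ⊗ A` to `K ⊗ A` induced by the structure morphism `R → K`. -/
noncomputable def tensorExtension : R ⊗[Z] A →ₐ[R] K ⊗[Z] A :=
  Algebra.TensorProduct.map (Algebra.ofId R K) (AlgHom.id Z A)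

theorem tensorExtension_tmul (r : R) (a : A) :
    tensorExtension Z R K A (r ⊗ₜ a) = algebraMap R K r ⊗ₜ a := rfl

theorem tensorExtension_injective [Module.Flat Z A] (h : Function.Injective (algebraMap R K)) :
    Function.Injective (tensorExtension Z R K A) :=
  Module.Flat.rTensor_preserves_injective_linearMap (M := A)
    (IsScalarTower.toAlgHom Z R K).toLinearMap h

theorem mem_range_tensorExtension {M : Submodule Z K}
    (hM : (M : Set K) ⊆ Set.range (algebraMap R K)) {x : K ⊗[Z] A}
    (hx : x ∈ LinearMap.range (M.subtype.rTensor A)) :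
    x ∈ Set.range (tensorExtension Z R K A) := by
  obtain ⟨y, rfl⟩ := hx
  induction y with
  | zero => exact ⟨0, by rw [map_zero, map_zero]⟩
  | tmul m a =>
    obtain ⟨r, hr⟩ := hM m.2
    exact ⟨r ⊗ₜ a, by rw [tensorExtension_tmul, hr]; rfl⟩
  | add y z hy hz =>
    obtain ⟨y', hy'⟩ := hy
    obtain ⟨z', hz'⟩ := hz
    exact ⟨y' + z', by rw [map_add, map_add, hy', hz']⟩

variable {ι : Type*} {κ : ι → Type*} [∀ i, Fintype (κ i)] [∀ i, DecidableEq (κ i)]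

theorem exists_map_comp_eq_comp_tensorExtension (h : Function.Injective (algebraMap R K))
    {G : K ⊗[Z] A →ₐ[K] MatrixProd κ K}
    (hG : ∀ a i p q, G (1 ⊗ₜ a) i p q ∈ Set.range (algebraMap R K)) :
    ∃ G' : R ⊗[Z] A →ₐ[R] MatrixProd κ R,
      (MatrixProd.map κ R K).comp G' =
        (G.restrictScalars R).comp (tensorExtension Z R K A) := by
  refine exists_algHom_comp_eq (MatrixProd.map_injective h) _ fun x => ?_
  induction x with
  | zero => rw [map_zero]; exact zero_mem _
  | tmul r a =>
    rw [← mul_one r, ← smul_eq_mul, ← TensorProduct.smul_tmul', map_smul]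
    refine Subalgebra.smul_mem _ (MatrixProd.mem_range_map ?_) r
    simpa [tensorExtension_tmul] using hG a
  | add x y hx hy => rw [map_add]; exact add_mem hx hy

end Tower

section Subalgebra

variable {Z K : Type*} [CommRing Z] [CommRing K] [Algebra Z K]

theorem fg_adjoin_of_fg {M : Submodule Z K} (hM : M.FG) :
    (Algebra.adjoin Z (M : Set K)).FG := by
  obtain ⟨s, rfl⟩ := hM
  rw [Algebra.adjoin_span]
  exact ⟨s, rfl⟩

variable {A ι : Type*} [Ring A] [Algebra Z A] [Module.Finite Z A] [Finite ι]
  {κ : ι → Type*} [∀ i, Fintype (κ i)] [∀ i, DecidableEq (κ i)]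

theorem exists_fg_forall_map_one_tmul_mem (G : K ⊗[Z] A →ₐ[K] MatrixProd κ K) :
    ∃ M : Submodule Z K, M.FG ∧ ∀ a i p q, G (1 ⊗ₜ a) i p q ∈ M := by
  let coeff (i : ι) (p q : κ i) : A →ₗ[Z] K :=
    (Matrix.entryLinearMap Z K p q).comp ((LinearMap.proj i).comp
      ((G.restrictScalars Z).comp Algebra.TensorProduct.includeRight).toLinearMap)
  refine ⟨⨆ i, ⨆ p, ⨆ q, LinearMap.range (coeff i p q), ?_, fun a i p q => ?_⟩
  · exact Submodule.fg_iSup _ fun i => Submodule.fg_iSup _ fun p => Submodule.fg_iSup _ fun q =>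
      Module.Finite.iff_fg.1 inferInstance
  · exact Submodule.mem_iSup_of_mem i (Submodule.mem_iSup_of_mem p
      (Submodule.mem_iSup_of_mem q ⟨a, rfl⟩))

theorem IsBasicSplitting.exists_fg_subalgebra [DecidableEq ι] [Module.Flat Z A]
    {o : ∀ i, κ i} {G : K ⊗[Z] A →ₐ[K] MatrixProd κ K} {e : ι → K ⊗[Z] A}
    (h : IsBasicSplitting o G e) :
    ∃ R : Subalgebra Z K, R.FG ∧ ∃ (G' : R ⊗[Z] A →ₐ[R] MatrixProd κ R) (e' : ι → R ⊗[Z] A),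
      IsBasicSplitting o G' e' := by
  choose u hu using fun i p q =>
    h.surjective (Pi.single i (Matrix.single p q 1) : MatrixProd κ K)
  obtain ⟨M, hM, hMs⟩ := TensorProduct.exists_finite_submodule_left_of_setFinite
    (Set.range e ∪ ⋃ i, ⋃ p, Set.range (u i p))
    ((Set.finite_range e).union
      (Set.finite_iUnion fun i => Set.finite_iUnion fun p => Set.finite_range (u i p)))
  obtain ⟨N, hN, hG⟩ := exists_fg_forall_map_one_tmul_mem G
  let R := Algebra.adjoin Z ((M ⊔ N : Submodule Z K) : Set K)
  have hinj : Function.Injective (algebraMap R K) := Subtype.val_injective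
  have hMN : ((M ⊔ N : Submodule Z K) : Set K) ⊆ Set.range (algebraMap R K) := fun x hx =>
    ⟨⟨x, Algebra.subset_adjoin hx⟩, rfl⟩
  have hMR : (M : Set K) ⊆ Set.range (algebraMap R K) := fun x hx => hMN (le_sup_left (a := M) hx)
  obtain ⟨G', hG'⟩ := exists_map_comp_eq_comp_tensorExtension hinj (G := G)
    fun a i p q => hMN (le_sup_right (a := M) (hG a i p q))
  choose e' he' using fun i => mem_range_tensorExtension hMR (hMs (.inl ⟨i, rfl⟩))
  refine ⟨R, fg_adjoin_of_fg ((Module.Finite.iff_fg.1 hM).sup hN), G', e',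
    .of_injective hinj (tensorExtension_injective hinj) hG' (by simpa only [he'] using h)
      fun i p q => ?_⟩
  obtain ⟨b, hb⟩ := mem_range_tensorExtension hMR (hMs (.inr (Set.mem_iUnion₂.2 ⟨i, p, q, rfl⟩)))
  exact ⟨b, hb ▸ hu i p q⟩

end Subalgebra

section Specialization

variable {Z : Type*} [CommRing Z]

theorem nonempty_algHom_of_isIntegral {S k : Type*} [CommRing S] [Algebra Z S]
    [Algebra.IsIntegral Z S] [FaithfulSMul Z S] [Field k] [IsAlgClosed k] [Algebra Z k] :
    Nonempty (S →ₐ[Z] k) := by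
  let P : Ideal Z := RingHom.ker (algebraMap Z k)
  have : P.IsPrime := RingHom.ker_isPrime _
  obtain ⟨Q, _, _⟩ := (inferInstance : Nonempty (P.primesOver S))
  let : Algebra (Z ⧸ P) k := (RingHom.kerLift (algebraMap Z k)).toAlgebra
  have : IsScalarTower Z (Z ⧸ P) k := .of_algebraMap_eq fun _ => rfl
  have : FaithfulSMul (Z ⧸ P) k := (faithfulSMul_iff_algebraMap_injective _ _).2
    (RingHom.kerLift_injective (algebraMap Z k))
  have : Module.IsTorsionFree (Z ⧸ P) (S ⧸ Q) :=
    Module.isTorsionFree_iff_faithfulSMul.2 inferInstance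
  let g : (S ⧸ Q) →ₐ[Z ⧸ P] k := IsAlgClosed.lift
  exact ⟨(g.restrictScalars Z).comp (Ideal.Quotient.mkₐ Z Q)⟩

theorem exists_forall_nonempty_algHom {K : Type*} [Field K] [Algebra Z K] [FaithfulSMul Z K]
    [Algebra.IsAlgebraic Z K] {R : Subalgebra Z K} (hR : R.FG) :
    ∃ N : Z, N ≠ 0 ∧ ∀ (k : Type u) [Field k] [IsAlgClosed k] [Algebra Z k],
      algebraMap Z k N ≠ 0 → Nonempty (R →ₐ[Z] k) := by
  have : IsDomain Z := (FaithfulSMul.algebraMap_injective Z K).isDomain (algebraMap Z K)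
  obtain ⟨T, rfl⟩ := hR
  obtain ⟨N, hN, hNT⟩ := Algebra.IsAlgebraic.exists_integral_multiples Z T
  refine ⟨N, hN, fun k _ _ _ hk => ?_⟩
  have hNK : algebraMap Z K N ≠ 0 :=
    (map_ne_zero_iff _ (FaithfulSMul.algebraMap_injective Z K)).2 hN
  let ZN := Localization.Away N
  let : Algebra ZN K := (IsLocalization.Away.lift N hNK.isUnit).toAlgebra
  have : IsScalarTower Z ZN K :=
    .of_algebraMap_eq fun z => (IsLocalization.Away.lift_eq N hNK.isUnit z).symm
  let : Algebra ZN k := (IsLocalization.Away.lift N hk.isUnit).toAlgebra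
  have : IsScalarTower Z ZN k :=
    .of_algebraMap_eq fun z => (IsLocalization.Away.lift_eq N hk.isUnit z).symm
  have : FaithfulSMul ZN K := (faithfulSMul_iff_algebraMap_injective _ _).2 <|
    IsLocalization.injective_of_map_algebraMap_zero (M := Submonoid.powers N) ZN
      (algebraMap ZN K) fun z hz => by
      rw [← IsScalarTower.algebraMap_apply, FaithfulSMul.algebraMap_eq_zero_iff] at hz
      rw [hz, map_zero]
  have hle : Algebra.adjoin Z (T : Set K) ≤ (integralClosure ZN K).restrictScalars Z := by
    refine Algebra.adjoin_le fun t ht => ?_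
    have hNt : IsIntegral ZN (algebraMap Z ZN N • t) := by
      rw [algebraMap_smul]
      exact (hNT t ht).tower_top
    have ht' := hNt.smul (IsLocalization.Away.invSelf (S := ZN) N)
    rwa [smul_smul, mul_comm, IsLocalization.Away.mul_invSelf, one_smul] at ht'
  have : FaithfulSMul ZN (integralClosure ZN K) := .tower_bot ZN (integralClosure ZN K) K
  obtain ⟨g⟩ := nonempty_algHom_of_isIntegral (Z := ZN) (S := integralClosure ZN K) (k := k)
  exact ⟨(g.restrictScalars Z).comp (Subalgebra.inclusion hle)⟩

end Specialization

section CartanMatrix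

theorem finrank_range_peirceMap_map {k B B' : Type*} [Field k] [Ring B] [Ring B'] [Algebra k B]
    [Algebra k B'] (E : B ≃ₐ[k] B') (a b : B) :
    Module.finrank k (LinearMap.range (peirceMap k (E a) (E b))) =
      Module.finrank k (LinearMap.range (peirceMap k a b)) := by
  have hconj : peirceMap k (E a) (E b) = E.toLinearEquiv.conj (peirceMap k a b) := by
    ext x
    simp [LinearEquiv.conj_apply]
  rw [hconj, LinearEquiv.conj_apply,
    LinearMap.range_comp_of_range_eq_top _ (LinearEquiv.range E.toLinearEquiv.symm),
    LinearMap.range_comp]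
  exact LinearEquiv.finrank_map_eq E.toLinearEquiv _

theorem IsBasicSplitting.comp_algEquiv {R B B' ι : Type*} [CommRing R] [Ring B] [Ring B']
    [Algebra R B] [Algebra R B'] [DecidableEq ι] {κ : ι → Type*} [∀ i, Fintype (κ i)]
    [∀ i, DecidableEq (κ i)] {o : ∀ i, κ i} {G : B →ₐ[R] MatrixProd κ R} {e : ι → B}
    (h : IsBasicSplitting o G e) (E : B ≃ₐ[R] B') :
    IsBasicSplitting o (G.comp E.symm.toAlgHom) (E ∘ e) where
  surjective := h.surjective.comp E.symm.surjective
  isNilpotent_ker := isNilpotent_of_map (f := E.symm.toAlgHom) E.symm.injective h.isNilpotent_ker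
    fun _ hx => hx
  isIdempotentElem i := (h.isIdempotentElem i).map E
  map_idem i := (congrArg G (E.symm_apply_apply (e i))).trans (h.map_idem i)

theorem IsBasicSplitting.hasCartanMatrix {R B : Type*} [CommRing R] [IsDomain R] [Ring B]
    [Algebra R B] [Module.Finite R B] [Module.Flat R B] {ι : Type} [Finite ι] [DecidableEq ι]
    {κ : ι → Type} [∀ i, Fintype (κ i)] [∀ i, DecidableEq (κ i)] {o : ∀ i, κ i}
    {G : B →ₐ[R] MatrixProd κ R} {e : ι → B} (h : IsBasicSplitting o G e) {k B' : Type u}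
    [Field k] [Algebra R k] [Ring B'] [Algebra k B'] (E : k ⊗[R] B ≃ₐ[k] B') :
    HasCartanMatrix B' fun i j : ULift.{u} ι => peirceRank R (e j.down) (e i.down) := by
  have := Fintype.ofFinite ι
  have : FiniteDimensional k B' := Module.Finite.equiv E.toLinearEquiv
  convert ((h.baseChange k).comp_algEquiv E).isDualFamily.hasCartanMatrix using 3 with i j
  rw [Function.comp_apply, Function.comp_apply, Function.comp_apply, Function.comp_apply,
    finrank_range_peirceMap_map,
    finrank_range_peirceMap_one_tmul (h.isIdempotentElem _) (h.isIdempotentElem _)]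

attribute [local instance] Algebra.TensorProduct.rightAlgebra in
/-- Associativity and commutativity of the tensor product identify `k ⊗ (R ⊗ A)` with `A ⊗ k`. -/
noncomputable def tensorTensorEquiv (Z R k A : Type*) [CommRing Z] [CommRing R] [CommRing k]
    [Algebra Z R] [Algebra Z k] [Algebra R k] [IsScalarTower Z R k] [Ring A] [Algebra Z A] :
    k ⊗[R] (R ⊗[Z] A) ≃ₐ[k] A ⊗[Z] k :=
  (Algebra.TensorProduct.assoc Z R k k R A).symm.trans
    ((Algebra.TensorProduct.congr (Algebra.TensorProduct.rid R k k) AlgEquiv.refl).trans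
      (Algebra.TensorProduct.commRight Z k A))

theorem cartan_matrix_independent_of_characteristic_general {Z : Type*} [CommRing Z] [IsDomain Z]
    (A : Type u) [Ring A] [Algebra Z A] [Module.Finite Z A] [Module.Flat Z A] :
    ∃ N : Z, N ≠ 0 ∧ ∃ (ι : Type u) (C : ι → ι → ℕ),
      ∀ (k : Type u) [Field k] [IsAlgClosed k] [Algebra Z k],
        algebraMap Z k N ≠ 0 → HasCartanMatrix (A ⊗[Z] k) C := by
  let K := AlgebraicClosure (FractionRing Z)
  have : Algebra.IsAlgebraic Z K :=
    (IsFractionRing.comap_isAlgebraic_iff (K := FractionRing Z)).2 inferInstance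
  have : FaithfulSMul Z K := .trans Z (FractionRing Z) K
  obtain ⟨n, d, o, G, e, h⟩ := exists_isBasicSplitting K (B := K ⊗[Z] A)
  obtain ⟨R, hR, G', e', h'⟩ := h.exists_fg_subalgebra
  obtain ⟨N, hN, hk⟩ := exists_forall_nonempty_algHom.{u} hR
  refine ⟨N, hN, ULift.{u} (Fin n),
    fun i j => peirceRank R (e' j.down) (e' i.down), fun k _ _ _ hNk => ?_⟩
  obtain ⟨f⟩ := hk k hNk
  let : Algebra R k := f.toAlgebra
  have : IsScalarTower Z R k := .of_algebraMap_eq fun z => (f.commutes z).symm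
  let : Algebra k (A ⊗[Z] k) := Algebra.TensorProduct.rightAlgebra
  exact h'.hasCartanMatrix (tensorTensorEquiv Z R k A)

theorem algebraMap_int_ne_zero_of_ringChar {k : Type*} [Ring k] {N : ℤ} (hN : N ≠ 0)
    (h : ringChar k = 0 ∨ (Nat.Prime (ringChar k) ∧ ringChar k ∉ N.natAbs.primeFactors)) :
    algebraMap ℤ k N ≠ 0 := by
  intro h0
  rw [eq_intCast, CharP.intCast_eq_zero_iff k (ringChar k), Int.natCast_dvd] at h0
  rcases h with h | ⟨hp, h⟩
  · rw [h, zero_dvd_iff, Int.natAbs_eq_zero] at h0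
    exact hN h0
  · exact h (Nat.mem_primeFactors.2 ⟨hp, h0, Int.natAbs_ne_zero.2 hN⟩)

end CartanMatrix

/-- Let `A` be a ring which is free of finite rank as a `ℤ`-module.  Then
there is a finite set `Pr` of primes such that for any two algebraically closed fields
`k`, `k'` whose characteristics are zero or primes outside `Pr`, the Cartan matrices of
`A ⊗ k` and `A ⊗ k'` coincide up to a simultaneous relabelling of the simple modules:
there are complete irredundant lists of simple modules over `A ⊗ k` and over `A ⊗ k'`
indexed by a common type `ι` such that, for all `i j`, the multiplicity of the `j`-th
simple module in a projective cover of the `i`-th one is the same on both sides. -/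
theorem cartan_matrix_independent_of_characteristic
    (A : Type u) [Ring A] [Module.Free ℤ A] [Module.Finite ℤ A] :
    ∃ Pr : Finset ℕ, (∀ p ∈ Pr, p.Prime) ∧
      ∀ (k k' : Type u) [Field k] [IsAlgClosed k] [Field k'] [IsAlgClosed k'],
        (ringChar k = 0 ∨ (Nat.Prime (ringChar k) ∧ ringChar k ∉ Pr)) →
        (ringChar k' = 0 ∨ (Nat.Prime (ringChar k') ∧ ringChar k' ∉ Pr)) →
        ∃ (ι : Type u) (S : ι → BundledModule (A ⊗[ℤ] k)) (S' : ι → BundledModule (A ⊗[ℤ] k')),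
          IsCompleteListOfSimples (A ⊗[ℤ] k) S ∧
          IsCompleteListOfSimples (A ⊗[ℤ] k') S' ∧
          ∀ i j : ι,
            ∀ (P : Type u) [AddCommGroup P] [Module (A ⊗[ℤ] k) P]
              (π : P →ₗ[A ⊗[ℤ] k] (S i)), IsProjectiveCover π →
            ∀ (P' : Type u) [AddCommGroup P'] [Module (A ⊗[ℤ] k') P']
              (π' : P' →ₗ[A ⊗[ℤ] k'] (S' i)), IsProjectiveCover π' →
            ∀ n : ℕ,
              HasCompositionFactorMult (A ⊗[ℤ] k) P (S j) n ↔
                HasCompositionFactorMult (A ⊗[ℤ] k') P' (S' j) n := by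
  obtain ⟨N, hN, _, _, hC⟩ := cartan_matrix_independent_of_characteristic_general (Z := ℤ) A
  exact ⟨N.natAbs.primeFactors, fun _ => Nat.prime_of_mem_primeFactors, fun k k' _ _ _ _ hk hk' =>
    (hC k (algebraMap_int_ne_zero_of_ringChar hN hk)).exists_forall_mult_iff
      (hC k' (algebraMap_int_ne_zero_of_ringChar hN hk'))⟩
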